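/- Let m ∈ ℕ with m ≥ 1 and let A ⊆ ℕ^m. Then the following are equivalent: (1) there exist functions α : 𝒫_f(ℕ^ℕ) → ℕ and H : 𝒫_f(ℕ^ℕ) → 𝒫_f(ℕ) such that (a) whenever F, G ∈ 𝒫_f(ℕ^ℕ) and F ⊊ G one has max H(F) < min H(G), and (b) whenever G₁ ⊊ G₂ ⊊ ⋯ ⊊ G_n ⊊ ⋯ is an infinite strictly increasing chain in 𝒫_f(ℕ^ℕ), f_i ∈ G_i for each i ∈ ℕ, and β₁ < β₂ < ⋯ < β_m are in 𝒫_f(ℕ), the tuple (Σ_{i∈β₁}(α(G_i)+Σ_{t∈H(G_i)}f_i(t)), …, Σ_{i∈β_m}(α(G_i)+Σ_{t∈H(G_i)}f_i(t))) belongs to A; (2) there exists an idempotent ultrafilter p ∈ 𝒥 such that A ∈ ⊗_{i=1}^m p. -/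

import Mathlib

namespace MultiCST

/-- The sum `p + q` of ultrafilters on ℕ: `A ∈ p + q` iff `{x : {y : x+y ∈ A} ∈ q} ∈ p`. -/
def uAdd (p q : Ultrafilter ℕ) : Ultrafilter ℕ :=
  p.bind fun x => q.map fun y => x + y

/-- `A ⊆ ℕ` is a J-set. -/
def IsJSet (A : Set ℕ) : Prop :=
  ∀ F : Finset (ℕ → ℕ), F.Nonempty →
    ∃ (a : ℕ) (β : Finset ℕ), β.Nonempty ∧ ∀ f ∈ F, a + ∑ t ∈ β, f t ∈ A

/-- `p ∈ 𝒥`: every member of `p` is a J-set. -/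
def MemJ (p : Ultrafilter ℕ) : Prop := ∀ A : Set ℕ, A ∈ p → IsJSet A

/-- `p` is an idempotent ultrafilter. -/
def IdempotentUF (p : Ultrafilter ℕ) : Prop := uAdd p p = p

/-- `p` is a minimal idempotent ultrafilter. -/
def IsMinimalIdempotent (p : Ultrafilter ℕ) : Prop :=
  IdempotentUF p ∧
    ∀ q : Ultrafilter ℕ, IdempotentUF q → uAdd q p = q → uAdd p q = q → q = p

/-- Tensor product `⊗_{i=1}^m p_i` of ultrafilters on ℕ, as an ultrafilter on `Fin m → ℕ`. -/
def tensor : ∀ m : ℕ, (Fin m → Ultrafilter ℕ) → Ultrafilter (Fin m → ℕ)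
  | 0, _ => pure fun i => i.elim0
  | m + 1, p =>
      (p 0).bind fun x => (tensor m fun i => p i.succ).map fun v => Fin.cons x v

/-- `f : ℕ → ℕ` is (given by) a polynomial with coefficients in ℕ and zero constant term. -/
def IsPolyZeroConst (f : ℕ → ℕ) : Prop :=
  ∃ P : Polynomial ℕ, P.coeff 0 = 0 ∧ ∀ x, f x = P.eval x

/-- The linear combination `a₁·p₁ + a₂·p₂ + ⋯ + a_m·p_m` of ultrafilters on ℕ. -/
def linComb : ∀ m : ℕ, (Fin m → ℕ) → (Fin m → Ultrafilter ℕ) → Ultrafilter ℕ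
  | 0, _, _ => pure 0
  | m + 1, a, p =>
      uAdd ((p 0).map fun x => a 0 * x)
        (linComb m (fun i => a i.succ) fun i => p i.succ)

/-!
Both directions go through the same picture of sums along increasing chains.

If `A ∈ ⊗ p` with `p` idempotent, then Galvin's trick of shrinking a member `D` of `p` to
`D⋆ = {x ∈ D | D - x ∈ p}` produces a tree of finite sequences, branching through members of `p`
at every node, such that along each infinite branch all increasing block sums lie in `A`. Members
of `p` are J-sets, so `α G` and `H G` can be chosen by recursion on `G` so as to obey, at once, the
finitely many nodes of the tree that are reached by chains below `G`; every chain then traces a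
branch.

Conversely, the sets of sums along chains starting beyond `F` are J-sets, decrease with `F`, and are
closed under adding sums that start late enough. Since the sets that are not J-sets form an ideal
(Hales–Jewett), some filter of J-sets contains all of these sets and is stable under addition; the
Ellis–Numakura lemma puts an idempotent `p` above it, and `A ∈ ⊗ p` follows by peeling off one block
at a time.
-/

open Filter

/-! ### Idempotent ultrafilters -/

section Idempotent

attribute [local instance] Ultrafilter.add Ultrafilter.addSemigroup

variable {M : Type*} [AddSemigroup M]

theorem exists_idempotent_ultrafilter_le {f : Filter M} [f.NeBot]
    (hf : ∀ s ∈ f, ∀ᶠ x in f, ∀ᶠ y in f, x + y ∈ s) :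
    ∃ p : Ultrafilter M, p + p = p ∧ ↑p ≤ f := by
  have hclosed : IsClosed {p : Ultrafilter M | ↑p ≤ f} := by
    simp only [Filter.le_def, Set.ofPred_forall]
    exact isClosed_biInter fun s _ => ultrafilter_isClosed_basic s
  obtain ⟨p, hpf, hp⟩ := exists_idempotent_in_compact_add_subsemigroup
    (M := Ultrafilter M) Ultrafilter.continuous_add_left _ (Ultrafilter.exists_le f)
    hclosed.isCompact fun p hp q hq s hs =>
      ((hf s hs).filter_mono hp).mono fun _ hx => hx.filter_mono hq
  exact ⟨p, hp, hpf⟩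

/-- The set `D⋆ = {x ∈ D | D - x ∈ p}`, which satisfies `D⋆ - x ∈ p` for all `x ∈ D⋆` when `p` is
idempotent. -/
def starSet (p : Ultrafilter M) (D : Set M) : Set M := {x ∈ D | ∀ᶠ y in p, x + y ∈ D}

theorem starSet_mem {p : Ultrafilter M} (hp : p + p = p) {D : Set M} (hD : D ∈ p) :
    starSet p D ∈ p := by
  have hDD : ∀ᶠ x in p, ∀ᶠ y in p, x + y ∈ D := by
    rwa [← Ultrafilter.eventually_add, hp]
  exact Filter.inter_mem hD hDD

theorem eventually_add_mem_starSet {p : Ultrafilter M} (hp : p + p = p) {D : Set M} {x : M}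
    (hx : x ∈ starSet p D) : ∀ᶠ y in p, x + y ∈ starSet p D := by
  filter_upwards [starSet_mem hp hx.2] with y hy
  exact ⟨hy.1, by simpa only [add_assoc] using! hy.2⟩

end Idempotent

/-! ### The tree filter -/

section TreeFilter

variable {X : Type*}

/-- The list of the first `n` terms of a sequence. -/
def initSeg (x : ℕ → X) (n : ℕ) : List X := (List.range n).map x

theorem length_initSeg (x : ℕ → X) (n : ℕ) : (initSeg x n).length = n := by
  simp [initSeg]

theorem initSeg_succ (x : ℕ → X) (n : ℕ) : initSeg x (n + 1) = initSeg x n ++ [x n] := by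
  simp [initSeg, List.range_succ]

theorem initSeg_add (x : ℕ → X) (k n : ℕ) :
    initSeg x (k + n) = initSeg x k ++ initSeg (fun j => x (k + j)) n := by
  simp [initSeg, List.range_add, Function.comp_def]

theorem sum_getD_initSeg {M : Type*} [AddCommMonoid M] (x : ℕ → M) {n : ℕ} {b : Finset ℕ}
    (hb : ∀ i ∈ b, i < n) : ∑ i ∈ b, (initSeg x n).getD i 0 = ∑ i ∈ b, x i :=
  Finset.sum_congr rfl fun i hi => by simp [initSeg, List.getD, hb i hi]

/-- The filter of sets of sequences that contain all infinite branches of some tree of finite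
sequences whose nodes all branch through members of `p`. Such a tree is encoded by the function `Φ`
that maps a node to the set of its admissible next terms. -/
def treeFilter (p : Filter X) : Filter (ℕ → X) where
  sets := {S | ∃ Φ : List X → Set X, (∀ l, Φ l ∈ p) ∧
    ∀ x : ℕ → X, (∀ n, x n ∈ Φ (initSeg x n)) → x ∈ S}
  univ_sets := ⟨fun _ => Set.univ, fun _ => univ_mem, fun _ _ => trivial⟩
  sets_of_superset := fun ⟨Φ, hΦ, hS⟩ hST => ⟨Φ, hΦ, fun x hx => hST (hS x hx)⟩
  inter_sets := fun ⟨Φ, hΦ, hS⟩ ⟨Ψ, hΨ, hT⟩ =>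
    ⟨fun l => Φ l ∩ Ψ l, fun l => inter_mem (hΦ l) (hΨ l), fun x hx =>
      ⟨hS x fun n => (hx n).1, hT x fun n => (hx n).2⟩⟩

theorem eventually_treeFilter {p : Filter X} {P : (ℕ → X) → Prop} :
    (∀ᶠ x in treeFilter p, P x) ↔ ∃ Φ : List X → Set X, (∀ l, Φ l ∈ p) ∧
      ∀ x : ℕ → X, (∀ n, x n ∈ Φ (initSeg x n)) → P x :=
  Iff.rfl

theorem eventually_treeFilter_forall_initSeg {p : Filter X} {R : List X → X → Prop}
    (hR : ∀ l, ∀ᶠ z in p, R l z) : ∀ᶠ x in treeFilter p, ∀ n, R (initSeg x n) (x n) :=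
  eventually_treeFilter.2 ⟨fun l => {z | R l z}, hR, fun _ hx => hx⟩

theorem eventually_treeFilter_forall_shift {p : Filter X} {Q : List X → (ℕ → X) → Prop}
    (hQ : ∀ l, ∀ᶠ y in treeFilter p, Q l y) :
    ∀ᶠ x in treeFilter p, ∀ k, Q (initSeg x k) fun j => x (k + j) := by
  simp only [eventually_treeFilter] at hQ ⊢
  choose Ψ hΨ hQ using hQ
  refine ⟨fun l => ⋂ k ∈ Finset.range (l.length + 1), Ψ (l.take k) (l.drop k),
    fun l => (biInter_finset_mem _).2 fun k _ => hΨ _ _, fun x hx k => hQ _ _ fun n => ?_⟩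
  have hxk := Set.mem_iInter₂.1 (hx (k + n)) k (by simp [length_initSeg])
  rwa [initSeg_add, List.take_left' (length_initSeg x k),
    List.drop_left' (length_initSeg x k)] at hxk

attribute [local instance] Ultrafilter.add in
theorem eventually_treeFilter_sum_mem {M : Type*} [AddCommMonoid M] {p : Ultrafilter M}
    (hp : p + p = p) {D : Set M} (hD : D ∈ p) :
    ∀ᶠ x in treeFilter (p : Filter M), ∀ b : Finset ℕ, b.Nonempty → ∑ i ∈ b, x i ∈ D := by
  have hstep : ∀ l : List M, ∀ᶠ z in (p : Filter M), z ∈ starSet p D ∧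
      ∀ b ∈ (Finset.range l.length).powerset, ∑ i ∈ b, l.getD i 0 ∈ starSet p D →
        ∑ i ∈ b, l.getD i 0 + z ∈ starSet p D := fun l =>
    Filter.Eventually.and (starSet_mem hp hD) <| (eventually_all_finset _).2 fun b _ =>
      eventually_imp_distrib_left.2 fun hb => eventually_add_mem_starSet hp hb
  filter_upwards [eventually_treeFilter_forall_initSeg hstep] with x hx b hb
  suffices hstar : ∑ i ∈ b, x i ∈ starSet p D from hstar.1
  induction b using Finset.induction_on_max with
  | empty => exact absurd hb Finset.not_nonempty_empty
  | insert n b hbn ih =>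
    rw [Finset.sum_insert fun hn => (hbn n hn).false, add_comm]
    rcases b.eq_empty_or_nonempty with rfl | hne
    · simpa using (hx n).1
    · have hadd := (hx n).2 b (by simpa [Finset.subset_iff, length_initSeg] using hbn)
      rw [sum_getD_initSeg x hbn] at hadd
      exact hadd (ih hne)

end TreeFilter

/-! ### Block sums and tensor powers -/

section Blocks

variable {M : Type*} [AddCommMonoid M] {m : ℕ}

/-- The condition `β₁ < β₂ < ⋯ < β_m` on nonempty finite subsets of `ℕ`. -/
structure IsBlockSeq (β : Fin m → Finset ℕ) : Prop where
  nonempty : ∀ l, (β l).Nonempty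
  lt : ∀ l l', l < l' → ∀ x ∈ β l, ∀ y ∈ β l', x < y

/-- The tuple of the sums of the sequence `x` over the blocks of `β`. -/
def blockSums (x : ℕ → M) (β : Fin m → Finset ℕ) : Fin m → M := fun l => ∑ i ∈ β l, x i

/-- The family consisting of the block `b` followed by the blocks of `γ` moved to the right by
`k`. -/
def consBlock (k : ℕ) (b : Finset ℕ) (γ : Fin m → Finset ℕ) : Fin (m + 1) → Finset ℕ :=
  Fin.cons b fun l => (γ l).map (addLeftEmbedding k)

theorem blockSums_consBlock (x : ℕ → M) (k : ℕ) (b : Finset ℕ) (γ : Fin m → Finset ℕ) :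
    blockSums x (consBlock k b γ) =
      Fin.cons (∑ i ∈ b, x i) (blockSums (fun j => x (k + j)) γ) := by
  ext l
  cases l using Fin.cases <;> simp [blockSums, consBlock]

theorem IsBlockSeq.consBlock {k : ℕ} {b : Finset ℕ} {γ : Fin m → Finset ℕ} (hγ : IsBlockSeq γ)
    (hb : b.Nonempty) (hbk : ∀ i ∈ b, i < k) : IsBlockSeq (consBlock k b γ) where
  nonempty l := by
    cases l using Fin.cases with
    | zero => simpa [MultiCST.consBlock] using hb
    | succ l => simpa [MultiCST.consBlock] using hγ.nonempty l
  lt l l' hll' := by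
    cases l' using Fin.cases with
    | zero => exact absurd hll' (Fin.not_lt_zero l)
    | succ l' =>
      cases l using Fin.cases with
      | zero =>
        simp only [MultiCST.consBlock, Fin.cons_zero, Fin.cons_succ, Finset.forall_mem_map,
          addLeftEmbedding_apply]
        exact fun x hx y _ => (hbk x hx).trans_le (Nat.le_add_right k y)
      | succ l =>
        simp only [MultiCST.consBlock, Fin.cons_succ, Finset.forall_mem_map,
          addLeftEmbedding_apply, Nat.add_lt_add_iff_left]
        exact hγ.lt l l' (Fin.succ_lt_succ_iff.1 hll')

theorem IsBlockSeq.exists_eq_consBlock {β : Fin (m + 1) → Finset ℕ} (hβ : IsBlockSeq β) :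
    ∃ (k : ℕ) (b : Finset ℕ) (γ : Fin m → Finset ℕ), b.Nonempty ∧ (∀ i ∈ b, i < k) ∧
      IsBlockSeq γ ∧ β = MultiCST.consBlock k b γ := by
  obtain ⟨i, hi, hmax⟩ := (β 0).exists_max_image id (hβ.nonempty 0)
  have hle : ∀ l : Fin m, ∀ y ∈ β l.succ, i + 1 ≤ y := fun l y hy =>
    hβ.lt 0 l.succ l.succ_pos i hi y hy
  choose! γ hγ using fun l : Fin m => show ∃ c : Finset ℕ,
      β l.succ = c.map (addLeftEmbedding (i + 1)) from
    ⟨(β l.succ).image (· - (i + 1)), by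
      ext y
      simp only [Finset.mem_map, Finset.mem_image, addLeftEmbedding_apply]
      constructor
      · exact fun hy => ⟨_, ⟨y, hy, rfl⟩, Nat.add_sub_cancel' (hle l y hy)⟩
      · rintro ⟨_, ⟨y, hy, rfl⟩, rfl⟩
        rwa [Nat.add_sub_cancel' (hle l y hy)]⟩
  refine ⟨i + 1, β 0, γ, hβ.nonempty 0, fun j hj => Nat.lt_succ_of_le (hmax j hj), ⟨?_, ?_⟩, ?_⟩
  · intro l
    simpa [hγ] using hβ.nonempty l.succ
  · intro l l' hll'
    simpa [hγ] using hβ.lt l.succ l'.succ (Fin.succ_lt_succ_iff.2 hll')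
  · ext l : 1
    cases l using Fin.cases <;> simp [MultiCST.consBlock, hγ]

theorem mem_tensor_succ {p : Fin (m + 1) → Ultrafilter ℕ} {A : Set (Fin (m + 1) → ℕ)} :
    A ∈ tensor (m + 1) p ↔
      ∀ᶠ x in p 0, {v | (Fin.cons x v : Fin (m + 1) → ℕ) ∈ A} ∈ tensor m fun i => p i.succ :=
  Iff.rfl

theorem mem_tensor_zero {p : Fin 0 → Ultrafilter ℕ} {A : Set (Fin 0 → ℕ)} (v : Fin 0 → ℕ) :
    A ∈ tensor 0 p ↔ v ∈ A := by
  rw [Subsingleton.elim v fun i => i.elim0]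
  exact Iff.rfl

theorem eventually_treeFilter_blockSums_mem {p : Ultrafilter ℕ} (hp : IdempotentUF p)
    {A : Set (Fin m → ℕ)} (hA : A ∈ tensor m fun _ => p) :
    ∀ᶠ x in treeFilter (p : Filter ℕ), ∀ β, IsBlockSeq β → blockSums x β ∈ A := by
  induction m with
  | zero => exact .of_forall fun x β _ => (mem_tensor_zero _).1 hA
  | succ m ih =>
    let D : Set ℕ :=
      {s | {v | (Fin.cons s v : Fin (m + 1) → ℕ) ∈ A} ∈ tensor m fun _ => p}
    have htail : ∀ l : List ℕ, ∀ᶠ y in treeFilter (p : Filter ℕ),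
        ∀ b ∈ (Finset.range l.length).powerset, ∑ i ∈ b, l.getD i 0 ∈ D →
          ∀ γ, IsBlockSeq γ →
            (Fin.cons (∑ i ∈ b, l.getD i 0) (blockSums y γ) : Fin (m + 1) → ℕ) ∈ A := fun l =>
      (eventually_all_finset _).2 fun b _ => eventually_imp_distrib_left.2 fun hb => ih hb
    filter_upwards [eventually_treeFilter_sum_mem hp (mem_tensor_succ.1 hA),
      eventually_treeFilter_forall_shift htail] with x hsum htail β hβ
    obtain ⟨k, b, γ, hb, hbk, hγ, rfl⟩ := hβ.exists_eq_consBlock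
    have hmem := htail k b (by simpa [Finset.subset_iff, length_initSeg] using hbk)
    rw [sum_getD_initSeg x hbk] at hmem
    rw [blockSums_consBlock]
    exact hmem (hsum b hb) γ hγ

end Blocks

/-! ### J-sets -/

section JSet

theorem IsJSet.mono {A B : Set ℕ} (hA : IsJSet A) (hAB : A ⊆ B) : IsJSet B := fun F hF =>
  let ⟨a, β, hβ, h⟩ := hA F hF
  ⟨a, β, hβ, fun f hf => hAB (h f hf)⟩

theorem not_isJSet_empty : ¬ IsJSet ∅ := fun h =>
  let ⟨_, _, _, hf⟩ := h {0} (Finset.singleton_nonempty 0)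
  hf 0 (Finset.mem_singleton_self 0)

theorem IsJSet.of_add_mem {A : Set ℕ} {x : ℕ} (h : IsJSet {y | x + y ∈ A}) : IsJSet A :=
  fun F hF =>
  let ⟨a, β, hβ, hf⟩ := h F hF
  ⟨x + a, β, hβ, fun f hfF => by simpa only [add_assoc] using! hf f hfF⟩

theorem IsJSet.exists_forall_le {A : Set ℕ} (hA : IsJSet A) (F : Finset (ℕ → ℕ)) (N : ℕ) :
    ∃ (a : ℕ) (β : Finset ℕ), β.Nonempty ∧ (∀ t ∈ β, N ≤ t) ∧
      ∀ f ∈ F, a + ∑ t ∈ β, f t ∈ A := by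
  classical
  obtain ⟨a, β, hβ, h⟩ := hA (insert 0 (F.image fun f t => f (N + t))) (Finset.insert_nonempty _ _)
  refine ⟨a, β.map (addLeftEmbedding N), hβ.map, by simp, fun f hf => ?_⟩
  simpa using h _ (Finset.mem_insert_of_mem (Finset.mem_image_of_mem _ hf))

theorem exists_sum_line_eq {κ ι M : Type*} [Fintype ι] [AddCommMonoid M]
    (l : Combinatorics.Line κ ι) (u : κ → ι → M) :
    ∃ (c : M) (I : Finset ι), I.Nonempty ∧ ∀ k, ∑ i, u (l k i) i = c + ∑ i ∈ I, u k i := by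
  classical
  refine ⟨∑ i, (l.idxFun i).elim 0 fun k => u k i, Finset.univ.filter (l.idxFun · = none),
    l.proper.imp fun i hi => by simpa using hi, fun k => ?_⟩
  rw [Finset.sum_filter, ← Finset.sum_add_distrib]
  refine Finset.sum_congr rfl fun i _ => ?_
  cases hi : l.idxFun i <;> simp [hi]

theorem IsJSet.exists_monochromatic {A : Set ℕ} (hA : IsJSet A) {F : Finset (ℕ → ℕ)}
    (hF : F.Nonempty) {κ : Type*} [Finite κ] (C : ℕ → κ) :
    ∃ (a : ℕ) (β : Finset ℕ) (c : κ), β.Nonempty ∧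
      ∀ f ∈ F, a + ∑ t ∈ β, f t ∈ A ∧ C (a + ∑ t ∈ β, f t) = c := by
  classical
  obtain ⟨ι, _, hι⟩ := Combinatorics.Line.exists_mono_in_high_dimension F κ
  obtain ⟨e, he⟩ := Countable.exists_injective_nat (ℕ × ι)
  -- Each word `w` in the letters `F` becomes a function that reads its letters on disjoint copies
  -- of `ℕ`, so that a combinatorial line turns into the sums of the `f ∈ F` over a common set.
  let g : (ι → F) → ℕ → ℕ := fun w t => ∑ i, (w i : ℕ → ℕ) (e (t, i))
  have : Nonempty F := hF.to_subtype
  obtain ⟨a, β, hβ, hmem⟩ := hA (Finset.univ.image g) (Finset.univ_nonempty.image g)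
  obtain ⟨l, c, hl⟩ := hι fun w => C (a + ∑ t ∈ β, g w t)
  obtain ⟨d, I, hI, hsum⟩ := exists_sum_line_eq l
    fun (f : F) i => ∑ t ∈ β, (f : ℕ → ℕ) (e (t, i))
  have hline : ∀ f : F, a + ∑ t ∈ β, g (l f) t =
      a + d + ∑ s ∈ (β ×ˢ I).image e, (f : ℕ → ℕ) s := fun f => by
    rw [Finset.sum_comm, hsum f, Finset.sum_image he.injOn, Finset.sum_product_right, add_assoc]
  refine ⟨a + d, (β ×ˢ I).image e, c, (hβ.product hI).image e, fun f hf => ?_⟩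
  rw [← hline ⟨f, hf⟩]
  exact ⟨hmem _ (Finset.mem_image_of_mem g (Finset.mem_univ _)), hl ⟨f, hf⟩⟩

theorem IsJSet.union {A B : Set ℕ} (h : IsJSet (A ∪ B)) : IsJSet A ∨ IsJSet B := by
  classical
  by_contra! hAB
  simp only [IsJSet, not_forall, not_exists, not_and] at hAB
  obtain ⟨⟨F, hF, hA⟩, G, -, hB⟩ := hAB
  obtain ⟨a, β, c, hβ, hc⟩ := h.exists_monochromatic (hF.mono (Finset.subset_union_left (s₂ := G)))
    (· ∈ A)
  by_cases hcA : c
  · obtain ⟨f, hf, hfA⟩ := hA a β hβ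
    exact hfA ((hc f (Finset.mem_union_left G hf)).2.mpr hcA)
  · obtain ⟨f, hf, hfB⟩ := hB a β hβ
    obtain ⟨hfAB, hfc⟩ := hc f (Finset.mem_union_right F hf)
    exact hfB (hfAB.resolve_left fun hfA => hcA (hfc.mp hfA))

/-- The filter dual to the ideal of sets that are not J-sets; `𝒥` consists of the ultrafilters
above it. -/
def jFilter : Filter ℕ :=
  comk (fun A => ¬ IsJSet A) not_isJSet_empty (fun _ hA _ hBA hB => hA (hB.mono hBA))
    fun _ hA _ hB h => h.union.elim hA hB

theorem memJ_iff_le_jFilter {p : Ultrafilter ℕ} : MemJ p ↔ ↑p ≤ jFilter := by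
  constructor
  · intro hp s hs
    by_contra hsp
    exact hs (hp _ (Ultrafilter.compl_mem_iff_notMem.2 hsp))
  · intro hp A hA
    by_contra hAJ
    have hAc : Aᶜ ∈ jFilter := by rwa [jFilter, mem_comk, compl_compl]
    exact Ultrafilter.compl_mem_iff_notMem.1 (hp hAc) hA

theorem eventually_jFilter_add_mem {s : Set ℕ} (hs : s ∈ jFilter) (x : ℕ) :
    ∀ᶠ y in jFilter, x + y ∈ s := fun h => hs (IsJSet.of_add_mem h)

theorem jFilter_inf_principal_neBot {A : Set ℕ} (hA : IsJSet A) : (jFilter ⊓ 𝓟 A).NeBot := by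
  rw [inf_principal_neBot_iff]
  intro s hs
  by_contra hsA
  exact hs (hA.mono fun x hxA hxs => hsA ⟨x, hxs, hxA⟩)

theorem exists_idempotent_memJ {ι : Type*} [Nonempty ι] {T : ι → Set ℕ} (hdir : Directed (· ⊇ ·) T)
    (hT : ∀ i, IsJSet (T i)) (hadd : ∀ i, ∀ s ∈ T i, ∃ j, ∀ t ∈ T j, s + t ∈ T i) :
    ∃ p : Ultrafilter ℕ, IdempotentUF p ∧ MemJ p ∧ ∀ i, T i ∈ p := by
  let f : Filter ℕ := jFilter ⊓ ⨅ i, 𝓟 (T i)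
  have hTf : ∀ i, T i ∈ f := fun i =>
    mem_inf_of_right (mem_iInf_of_mem i (mem_principal_self _))
  have hdir' : Directed (· ≥ ·) fun i => 𝓟 (T i) := fun i j =>
    let ⟨k, hik, hjk⟩ := hdir i j
    ⟨k, principal_mono.2 hik, principal_mono.2 hjk⟩
  have hbasis : ∀ s ∈ f, ∃ B ∈ jFilter, ∃ i, B ∩ T i ⊆ s := by
    intro s hs
    obtain ⟨B, hB, R, hR, hBR⟩ := mem_inf_iff_superset.1 hs
    obtain ⟨i, hi⟩ := (mem_iInf_of_directed hdir' R).1 hR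
    exact ⟨B, hB, i, (Set.inter_subset_inter_right B hi).trans hBR⟩
  have : f.NeBot := forall_mem_nonempty_iff_neBot.1 fun s hs => by
    obtain ⟨B, hB, i, hBs⟩ := hbasis s hs
    have := jFilter_inf_principal_neBot (hT i)
    exact (nonempty_of_mem (inter_mem_inf hB (mem_principal_self (T i)))).mono hBs
  have hf : ∀ s ∈ f, ∀ᶠ x in f, ∀ᶠ y in f, x + y ∈ s := by
    intro s hs
    obtain ⟨B, hB, i, hBs⟩ := hbasis s hs
    filter_upwards [hTf i] with x hx
    obtain ⟨j, hj⟩ := hadd i x hx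
    filter_upwards [mem_inf_of_left (eventually_jFilter_add_mem hB x), hTf j] with y hyB hyT
    exact hBs ⟨hyB, hj y hyT⟩
  obtain ⟨p, hp, hpf⟩ := exists_idempotent_ultrafilter_le hf
  exact ⟨p, hp, memJ_iff_le_jFilter.2 (hpf.trans inf_le_left), fun i => hpf (hTf i)⟩

end JSet

/-! ### Sums along chains -/

section Chains

variable {X M : Type*} [AddCommMonoid M]

/-- The sequence that follows `c` for `n` terms and `d` from then on. -/
def splice (n : ℕ) (c d : ℕ → X) : ℕ → X := fun i => if i < n then c i else d (i - n)

theorem splice_of_lt {n i : ℕ} (c d : ℕ → X) (hi : i < n) : splice n c d i = c i := if_pos hi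

theorem splice_add (n : ℕ) (c d : ℕ → X) (j : ℕ) : splice n c d (n + j) = d j := by
  simp [splice]

theorem sum_range_splice (v : X → M) (n : ℕ) (c d : ℕ → X) :
    ∑ i ∈ Finset.range n, v (splice n c d i) = ∑ i ∈ Finset.range n, v (c i) :=
  Finset.sum_congr rfl fun i hi => by rw [splice_of_lt c d (Finset.mem_range.1 hi)]

variable [Preorder X]

theorem strictMono_splice {n : ℕ} {c d : ℕ → X} (hc : StrictMono c) (hd : StrictMono d)
    (hcd : c n < d 0) : StrictMono (splice (n + 1) c d) := by
  refine strictMono_nat_of_lt_succ fun i => ?_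
  rcases lt_trichotomy i n with hi | rfl | hi
  · rw [splice_of_lt c d (by omega), splice_of_lt c d (by omega)]
    exact hc i.lt_succ_self
  · rw [splice_of_lt c d i.lt_succ_self]
    exact hcd.trans_eq (splice_add (i + 1) c d 0).symm
  · obtain ⟨j, rfl⟩ := Nat.exists_eq_add_of_le (Nat.succ_le_of_lt hi)
    rw [add_assoc, splice_add, splice_add]
    exact hd j.lt_succ_self

/-- The sums `v c₀ + ⋯ + v cₙ` along chains `a < c₀ < ⋯ < cₙ` that extend to infinite ones. -/
def chainSums (v : X → M) (a : X) : Set M :=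
  {s | ∃ (c : ℕ → X) (n : ℕ), StrictMono c ∧ a < c 0 ∧ s = ∑ i ∈ Finset.range (n + 1), v (c i)}

theorem antitone_chainSums (v : X → M) : Antitone (chainSums v) :=
  fun _ _ hab _ ⟨c, n, hc, hb, hs⟩ => ⟨c, n, hc, hab.trans_lt hb, hs⟩

theorem apply_mem_chainSums [NoMaxOrder X] (v : X → M) {a b : X} (hab : a < b) :
    v b ∈ chainSums v a := by
  obtain ⟨c, hc, rfl⟩ := Nat.exists_strictMono' b
  exact ⟨c, 0, hc, hab, by simp⟩

theorem exists_forall_add_mem_chainSums {v : X → M} {a : X} {s : M} (hs : s ∈ chainSums v a) :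
    ∃ b, ∀ t ∈ chainSums v b, s + t ∈ chainSums v a := by
  obtain ⟨c, n, hc, ha, rfl⟩ := hs
  refine ⟨c n, ?_⟩
  rintro _ ⟨d, r, hd, hcd, rfl⟩
  refine ⟨splice (n + 1) c d, n + 1 + r, strictMono_splice hc hd hcd,
    by rwa [splice_of_lt c d n.succ_pos], ?_⟩
  rw [add_assoc (n + 1) r 1, Finset.sum_range_add _ (n + 1) (r + 1)]
  simp only [splice_add, sum_range_splice]

theorem mem_tensor_of_blockSums_mem [NoMaxOrder X] {p : Ultrafilter ℕ} {v : X → ℕ}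
    (hp : ∀ a, chainSums v a ∈ p) {m : ℕ} {A : Set (Fin m → ℕ)} (a : X)
    (hA : ∀ c, StrictMono c → a < c 0 → ∀ β, IsBlockSeq β → blockSums (v ∘ c) β ∈ A) :
    A ∈ tensor m fun _ => p := by
  induction m generalizing a with
  | zero =>
    obtain ⟨b, hab⟩ := exists_gt a
    obtain ⟨c, hc, rfl⟩ := Nat.exists_strictMono' b
    exact (mem_tensor_zero _).2 (hA c hc hab Fin.elim0 ⟨fun l => l.elim0, fun l => l.elim0⟩)
  | succ m ih =>
    rw [mem_tensor_succ]
    filter_upwards [hp a]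
    rintro _ ⟨c, n, hc, ha, rfl⟩
    refine ih (c n) fun d hd hcd γ hγ => ?_
    have hmem := hA _ (strictMono_splice hc hd hcd) (by rwa [splice_of_lt c d n.succ_pos]) _
      (hγ.consBlock (Finset.nonempty_range_add_one (n := n)) fun _ => Finset.mem_range.1)
    simpa only [blockSums_consBlock, Function.comp_apply, sum_range_splice, splice_add] using! hmem

end Chains

/-! ### Chains of finite sets of functions -/

section PointedFinset

/-- A nonempty finite set together with one of its elements; the order compares only the sets, so
that strictly increasing sequences are the chains `G₀ ⊊ G₁ ⊊ ⋯` with a selection `fᵢ ∈ Gᵢ`. -/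
structure PointedFinset (W : Type*) where
  carrier : Finset W
  point : W
  point_mem : point ∈ carrier

variable {W : Type*}

instance : Preorder (PointedFinset W) := Preorder.lift PointedFinset.carrier

instance [Nonempty W] : Nonempty (PointedFinset W) :=
  ‹Nonempty W›.map fun w => ⟨{w}, w, Finset.mem_singleton_self w⟩

instance : IsDirectedOrder (PointedFinset W) where
  directed a b := by
    classical
    exact ⟨⟨a.carrier ∪ b.carrier, a.point, Finset.mem_union_left _ a.point_mem⟩,
      Finset.subset_union_left, Finset.subset_union_right⟩

instance [Infinite W] : NoMaxOrder (PointedFinset W) where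
  exists_gt a := by
    classical
    obtain ⟨w, hw⟩ := Infinite.exists_notMem_finset a.carrier
    exact ⟨⟨insert w a.carrier, w, Finset.mem_insert_self w _⟩, Finset.ssubset_insert hw⟩

/-- The term `α(G) + ∑_{t ∈ H(G)} f(t)` attached to `f ∈ G`. -/
def chainTerm (α : Finset (ℕ → ℕ) → ℕ) (H : Finset (ℕ → ℕ) → Finset ℕ)
    (a : PointedFinset (ℕ → ℕ)) : ℕ :=
  α a.carrier + ∑ t ∈ H a.carrier, a.point t

theorem isJSet_chainSums_chainTerm (α : Finset (ℕ → ℕ) → ℕ) {H : Finset (ℕ → ℕ) → Finset ℕ}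
    (hH : ∀ F : Finset (ℕ → ℕ), F.Nonempty → (H F).Nonempty) (a : PointedFinset (ℕ → ℕ)) :
    IsJSet (chainSums (chainTerm α H) a) := by
  classical
  intro F hF
  obtain ⟨f₀, hf₀⟩ := hF
  obtain ⟨⟨G, g, hg⟩, hG⟩ :=
    exists_gt (⟨a.carrier ∪ F, f₀, Finset.mem_union_right _ hf₀⟩ : PointedFinset (ℕ → ℕ))
  have hGF : a.carrier ∪ F ⊂ G := hG
  exact ⟨α G, H G, hH G ⟨g, hg⟩, fun f hf =>
    apply_mem_chainSums (chainTerm α H)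
      (b := ⟨G, f, hGF.subset (Finset.mem_union_right _ hf)⟩)
      (Finset.subset_union_left.trans_ssubset hGF)⟩

end PointedFinset

/-! ### Choosing `α` and `H` by recursion -/

section Recursion

theorem exists_forall_image_Iio {ι Y : Type*} [Preorder ι] [LocallyFiniteOrderBot ι]
    [WellFoundedLT ι] [DecidableEq Y] {P : ι → Finset Y → Y → Prop}
    (hP : ∀ i s, ∃ y, P i s y) : ∃ q : ι → Y, ∀ i, P i ((Finset.Iio i).image q) (q i) := by
  choose g hg using hP
  let step : ∀ i, (∀ j < i, Y) → Y := fun i rec =>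
    g i ((Finset.Iio i).attach.image fun j => rec j.1 (Finset.mem_Iio.1 j.2))
  let q : ι → Y := WellFoundedLT.fix step
  have hq : ∀ i, q i = g i ((Finset.Iio i).image q) := fun i => by
    rw [show q i = step i fun j _ => q j from WellFoundedLT.fix_eq step i]
    exact congrArg (g i) (by ext; simp)
  exact ⟨q, fun i => (hq i).symm ▸ hg i _⟩

/-- A choice of `a = α(G)` and `β = H(G)`, together with the finite set `histories` of the lists of
terms of the chains that end at `G`, which the recursion has to take into account above `G`. -/
structure Choice where
  a : ℕ
  β : Finset ℕ
  histories : Finset (List ℕ)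

/-- The lists of terms of the chains that end at one of the sets where the choices in `s` were
made, and of the empty chain. -/
def pastHistories (s : Finset Choice) : Finset (List ℕ) :=
  insert [] (s.biUnion Choice.histories)

/-- The choice `q` at `G` respects the tree `Φ` and the earlier choices in `s`. -/
structure Choice.IsAdmissible (Φ : List ℕ → Set ℕ) (G : Finset (ℕ → ℕ)) (s : Finset Choice)
    (q : Choice) : Prop where
  nonempty : q.β.Nonempty
  lt : ∀ z ∈ s, ∀ x ∈ z.β, ∀ y ∈ q.β, x < y
  mem : ∀ l ∈ pastHistories s, ∀ f ∈ G, q.a + ∑ t ∈ q.β, f t ∈ Φ l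
  append_mem : ∀ l ∈ pastHistories s, ∀ f ∈ G, l ++ [q.a + ∑ t ∈ q.β, f t] ∈ q.histories

theorem MemJ.exists_isAdmissible {p : Ultrafilter ℕ} (hJ : MemJ p) {Φ : List ℕ → Set ℕ}
    (hΦ : ∀ l, Φ l ∈ p) (G : Finset (ℕ → ℕ)) (s : Finset Choice) :
    ∃ q : Choice, q.IsAdmissible Φ G s := by
  have hC : ⋂ l ∈ pastHistories s, Φ l ∈ p := (biInter_finset_mem _).2 fun l _ => hΦ l
  obtain ⟨a, β, hβ, hN, hmem⟩ :=
    (hJ _ hC).exists_forall_le G (s.sup fun z => z.β.sup id + 1)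
  refine ⟨⟨a, β, (pastHistories s ×ˢ G).image fun u => u.1 ++ [a + ∑ t ∈ β, u.2 t]⟩,
    hβ, fun z hz x hx y hy => ?_, fun l hl f hf => Set.mem_iInter₂.1 (hmem f hf) l hl,
    fun l hl f hf => Finset.mem_image.2 ⟨(l, f), Finset.mk_mem_product hl hf, rfl⟩⟩
  calc x ≤ z.β.sup id := Finset.le_sup (f := id) hx
    _ < z.β.sup id + 1 := Nat.lt_succ_self _
    _ ≤ s.sup fun z => z.β.sup id + 1 := Finset.le_sup (f := fun z : Choice => z.β.sup id + 1) hz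
    _ ≤ y := hN y hy

theorem initSeg_mem_pastHistories [DecidableEq Choice] [DecidableEq (ℕ → ℕ)]
    {Φ : List ℕ → Set ℕ} {q : Finset (ℕ → ℕ) → Choice}
    (hq : ∀ G, (q G).IsAdmissible Φ G ((Finset.Iio G).image q))
    {c : ℕ → PointedFinset (ℕ → ℕ)} (hc : StrictMono c) (n : ℕ) :
    initSeg (chainTerm (fun G => (q G).a) (fun G => (q G).β) ∘ c) n ∈
      pastHistories ((Finset.Iio (c n).carrier).image q) := by
  induction n with
  | zero => exact Finset.mem_insert_self _ _
  | succ n ih =>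
    have hlt : (c n).carrier < (c (n + 1)).carrier := hc n.lt_succ_self
    rw [initSeg_succ]
    exact Finset.mem_insert_of_mem <| Finset.mem_biUnion.2
      ⟨q (c n).carrier, Finset.mem_image_of_mem q (Finset.mem_Iio.2 hlt),
        (hq _).append_mem _ ih _ (c n).point_mem⟩

theorem MemJ.exists_forall_strictMono {p : Ultrafilter ℕ} (hJ : MemJ p) {P : (ℕ → ℕ) → Prop}
    (hP : ∀ᶠ x in treeFilter (p : Filter ℕ), P x) :
    ∃ (α : Finset (ℕ → ℕ) → ℕ) (H : Finset (ℕ → ℕ) → Finset ℕ), (∀ F, (H F).Nonempty) ∧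
      (∀ F G, F ⊂ G → ∀ x ∈ H F, ∀ y ∈ H G, x < y) ∧
        ∀ c : ℕ → PointedFinset (ℕ → ℕ), StrictMono c → P (chainTerm α H ∘ c) := by
  classical
  obtain ⟨Φ, hΦ, hP⟩ := eventually_treeFilter.1 hP
  obtain ⟨q, hq⟩ := exists_forall_image_Iio (hJ.exists_isAdmissible hΦ)
  exact ⟨fun G => (q G).a, fun G => (q G).β, fun F => (hq F).nonempty,
    fun F G hFG => (hq G).lt (q F) (Finset.mem_image_of_mem q (Finset.mem_Iio.2 hFG)),
    fun c hc => hP _ fun n =>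
      (hq _).mem _ (initSeg_mem_pastHistories hq hc n) _ (c n).point_mem⟩

end Recursion

/-- Multidimensional Stronger Central Sets Theorem I (infinitary form). -/
theorem multidimensional_stronger_CST_I_infinitary (m : ℕ) (hm : 1 ≤ m)
    (A : Set (Fin m → ℕ)) :
    (∃ (α : Finset (ℕ → ℕ) → ℕ) (H : Finset (ℕ → ℕ) → Finset ℕ),
      (∀ F : Finset (ℕ → ℕ), F.Nonempty → (H F).Nonempty) ∧
      (∀ F G : Finset (ℕ → ℕ), F.Nonempty → F ⊂ G →
        ∀ x ∈ H F, ∀ y ∈ H G, x < y) ∧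
      (∀ G : ℕ → Finset (ℕ → ℕ),
        (∀ i, (G i).Nonempty) → (∀ i j, i < j → G i ⊂ G j) →
        ∀ f : ℕ → ℕ → ℕ, (∀ i, f i ∈ G i) →
        ∀ β : Fin m → Finset ℕ,
          (∀ l, (β l).Nonempty) →
          (∀ l l' : Fin m, l < l' → ∀ x ∈ β l, ∀ y ∈ β l', x < y) →
          (fun l => ∑ i ∈ β l, (α (G i) + ∑ t ∈ H (G i), f i t)) ∈ A))
    ↔
    (∃ p : Ultrafilter ℕ, IdempotentUF p ∧ MemJ p ∧ A ∈ tensor m fun _ => p) := by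
  constructor
  · rintro ⟨α, H, hH, -, hA⟩
    obtain ⟨p, hp, hJ, hT⟩ := exists_idempotent_memJ
      (antitone_chainSums (chainTerm α H)).directed_ge (isJSet_chainSums_chainTerm α hH)
      fun _ _ hs => exists_forall_add_mem_chainSums hs
    exact ⟨p, hp, hJ, mem_tensor_of_blockSums_mem hT (Classical.arbitrary _) fun c hc _ β hβ =>
      hA _ (fun i => ⟨_, (c i).point_mem⟩) (fun i j hij => hc hij) _ (fun i => (c i).point_mem) β
        hβ.nonempty hβ.lt⟩
  · rintro ⟨p, hp, hJ, hA⟩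
    obtain ⟨α, H, hH, hlt, hchain⟩ :=
      hJ.exists_forall_strictMono (eventually_treeFilter_blockSums_mem hp hA)
    exact ⟨α, H, fun F _ => hH F, fun F G _ => hlt F G, fun G _ hG f hf β hβ hβlt =>
      hchain (fun i => ⟨G i, f i, hf i⟩) (fun i j hij => hG i j hij) β ⟨hβ, hβlt⟩⟩

end MultiCST
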